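/- Let 𝔽 be an algebraically closed field and let G, H ∈ SL₂(𝔽) satisfy the braid relation G·H·G = H·G·H. If the pair (G,H) is irreducible (has no common eigenvector), then tr(G·H) = 1 and G²·H·G²·H = -E. -/

import Mathlib

/-!
Write `τ = tr(GH)` and `t = tr G = tr H` (the braid relation makes `G` and `H` conjugate).
Cayley–Hamilton for `GH` gives `GHG = τ G - H⁻¹`, and for `HG` it gives `HGH = τ H - G⁻¹`;
since `G⁻¹ = t - G` and `H⁻¹ = t - H`, the braid relation becomes `(τ - 1)(G - H) = 0`.
Irreducibility excludes `G = H`, because `G` has an eigenvector over an algebraically closed field,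
so `τ = 1`. Then `D = GHG` has trace `tτ - t = 0`, hence `D² = -1`, and `G²HG²H = G D² G⁻¹`.
-/

open Matrix MatrixGroups

/-- A pair `(G, H)` in `SL₂(𝔽)` is reducible if `G` and `H` have a common
eigenvector in `𝔽²`. -/
def HasCommonEigenvector {F : Type*} [Field F]
    (A B : Matrix.SpecialLinearGroup (Fin 2) F) : Prop :=
  ∃ v : Fin 2 → F, v ≠ 0 ∧
    (∃ a : F, (A : Matrix (Fin 2) (Fin 2) F) *ᵥ v = a • v) ∧
    (∃ b : F, (B : Matrix (Fin 2) (Fin 2) F) *ᵥ v = b • v)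

/-- Cayley–Hamilton in `SL₂`. -/
lemma sl2_mul_self {F : Type*} [Field F] (M : Matrix.SpecialLinearGroup (Fin 2) F) :
    (M : Matrix (Fin 2) (Fin 2) F) * M = Matrix.trace (M : Matrix (Fin 2) (Fin 2) F) • M.1 - 1 := by
  have h := M.2
  rw [Matrix.det_fin_two] at h
  ext i j
  fin_cases i <;> fin_cases j <;>
    simp [Matrix.mul_apply, Fin.sum_univ_two, Matrix.trace_fin_two] <;>
    first | ring1 | linear_combination -h

lemma sl2_inv {F : Type*} [Field F] (M : Matrix.SpecialLinearGroup (Fin 2) F) :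
    ((M⁻¹ : Matrix.SpecialLinearGroup (Fin 2) F) : Matrix (Fin 2) (Fin 2) F)
      = Matrix.trace (M : Matrix (Fin 2) (Fin 2) F) • 1 - M.1 := by
  rw [Matrix.SpecialLinearGroup.coe_inv, Matrix.adjugate_fin_two]
  ext i j
  fin_cases i <;> fin_cases j <;> simp [Matrix.trace_fin_two]

/-- Cayley–Hamilton for `AB`, multiplied on the right by `B⁻¹`. -/
lemma sl2_mul_mul {F : Type*} [Field F] (A B : Matrix.SpecialLinearGroup (Fin 2) F) :
    A.1 * B.1 * A.1 = Matrix.trace (A.1 * B.1) • A.1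
      - ((B⁻¹ : Matrix.SpecialLinearGroup (Fin 2) F) : Matrix (Fin 2) (Fin 2) F) := by
  have h := sl2_mul_self (A * B)
  have hB : B.1 * (B⁻¹).1 = 1 := by
    rw [← Matrix.SpecialLinearGroup.coe_mul, mul_inv_cancel, Matrix.SpecialLinearGroup.coe_one]
  simp only [Matrix.SpecialLinearGroup.coe_mul] at h
  have h2 := congrArg (· * (B⁻¹).1) h
  simp only [sub_mul, smul_mul_assoc, one_mul] at h2
  simpa only [mul_assoc, hB, mul_one] using h2

lemma exists_eigenvector {F : Type*} [Field F] [IsAlgClosed F]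
    (A : Matrix (Fin 2) (Fin 2) F) : ∃ v : Fin 2 → F, v ≠ 0 ∧ ∃ a : F, A *ᵥ v = a • v := by
  obtain ⟨a, ha⟩ := Module.End.exists_eigenvalue (Matrix.toLin' A)
  obtain ⟨v, hv⟩ := ha.exists_hasEigenvector
  exact ⟨v, hv.2, a, by simpa using hv.apply_eq_smul⟩

theorem irreducible_braid_pair_fibre
    {F : Type*} [Field F] [IsAlgClosed F]
    (G H : Matrix.SpecialLinearGroup (Fin 2) F)
    (hrel : G * H * G = H * G * H)
    (hirr : ¬ HasCommonEigenvector G H) :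
    Matrix.trace ((G * H : Matrix.SpecialLinearGroup (Fin 2) F) :
      Matrix (Fin 2) (Fin 2) F) = 1 ∧
    ((G ^ 2 * H * G ^ 2 * H : Matrix.SpecialLinearGroup (Fin 2) F) :
      Matrix (Fin 2) (Fin 2) F) = -1 := by
  have hne : G.1 - H.1 ≠ 0 := by
    intro h
    obtain ⟨v, hv, a, ha⟩ := exists_eigenvector G.1
    exact hirr ⟨v, hv, ⟨a, ha⟩, a, by rw [← sub_eq_zero.mp h]; exact ha⟩
  have htr : Matrix.trace G.1 = Matrix.trace H.1 := by
    -- By the braid relation, `H` is the conjugate of `G` by `GH`.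
    have hc : H = (G * H) * (G * (G * H)⁻¹) := by
      rw [← mul_assoc, hrel]; group
    rw [hc, Matrix.SpecialLinearGroup.coe_mul, Matrix.trace_mul_comm,
      ← Matrix.SpecialLinearGroup.coe_mul, inv_mul_cancel_right]
  have hM : G.1 * H.1 * G.1 = H.1 * G.1 * H.1 := by
    simpa only [Matrix.SpecialLinearGroup.coe_mul] using congrArg Subtype.val hrel
  have hτ : Matrix.trace (G.1 * H.1) = 1 := by
    have h := hM
    rw [sl2_mul_mul, sl2_mul_mul, Matrix.trace_mul_comm H.1, sl2_inv, sl2_inv, htr] at h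
    have h0 : (Matrix.trace (G.1 * H.1) - 1) • (G.1 - H.1) = 0 := by
      rw [← sub_eq_zero] at h
      rw [← h]
      module
    exact sub_eq_zero.mp ((smul_eq_zero.mp h0).resolve_right hne)
  have hD : Matrix.trace (G * H * G).1 = 0 := by
    rw [Matrix.SpecialLinearGroup.coe_mul, Matrix.SpecialLinearGroup.coe_mul, sl2_mul_mul,
      hτ, sl2_inv, htr.symm]
    simp [Matrix.trace_sub, Matrix.trace_smul, ← htr]
    ring
  have hsq := sl2_mul_self (G * H * G)
  rw [hD, zero_smul, zero_sub] at hsq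
  refine ⟨by rw [Matrix.SpecialLinearGroup.coe_mul]; exact hτ, ?_⟩
  -- The regular fibre is the conjugate by `G` of the square of `D = GHG`.
  have hc : G ^ 2 * H * G ^ 2 * H = G * ((G * H * G) * (G * H * G)) * G⁻¹ := by
    simp [pow_two, mul_assoc]
  rw [hc, Matrix.SpecialLinearGroup.coe_mul, Matrix.SpecialLinearGroup.coe_mul,
    Matrix.SpecialLinearGroup.coe_mul (G * H * G), hsq, mul_neg, mul_one, neg_mul,
    ← Matrix.SpecialLinearGroup.coe_mul, mul_inv_cancel, Matrix.SpecialLinearGroup.coe_one]
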